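/- Let x₁, x₂ ∈ ℝ³, let γ₀ : [0,1] → ℝ³ be a C¹ path with γ₀(0) = x₁, γ₀(1) = x₂, γ_y(u) = γ₀(u) + u(1−u)y, and let s : ℝ³ → ℝ be a compactly supported continuous function with ∫ s = q. For 0 < ε < 1/2 define ⟨b_ε, g⟩ = ∫_ε^{1−ε} ∫_{ℝ³} s(y) g(γ_y(u)) · (γ₀'(u) + (1−2u)y) dy du. Let s' : ℝ³ → ℝ be a smooth compactly supported function with ∫ s' = 1 and supp s' ⊆ closedBall(0, r), let B ⊂ ℝ³ be a rectangular box with s'_B(x) = ∫_B s'(x − y) dy, and assume that for each i ∈ {1, 2} either closedBall(xᵢ, r) ⊆ B or closedBall(xᵢ, r) ∩ B = ∅. Then lim_{ε→0} ( −⟨b_ε, grad s'_B⟩ ) = q·(χ₁ − χ₂), where χᵢ = 1 if closedBall(xᵢ, r) ⊆ B and χᵢ = 0 otherwise. In particular the smeared flux of the gauge bridge through the boundary of B equals q if B encloses only x₁, −q if B encloses only x₂, and 0 if B encloses both or neither of the charge locations (Gauss' law for the gauge bridge). -/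

import Mathlib

/-!
Evaluating the gradient of `F = 1_B ⋆ s'` on the velocity of a path `γ_y` gives the derivative of
`F` along `γ_y`, so after exchanging the two integrals the pairing telescopes to
`⟨b_ε, grad F⟩ = ∫ s(y) (F(γ_y(1 - ε)) - F(γ_y(ε))) dy`. All the paths `γ_y` share their endpoints,
and `F` is bounded and continuous; dominated convergence gives the limit
`(∫ s) (F(x₂) - F(x₁))`. Finally `F(xᵢ)` is the integral of `y ↦ s'(xᵢ - y)`, a function supported
in the ball of radius `r` around `xᵢ`, over `B`: all of `∫ s'` if the ball lies in `B`, nothing if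
it misses `B`.
-/

open MeasureTheory Filter Classical

/-- ℝ³ with the Euclidean norm. -/
abbrev E3 := EuclideanSpace ℝ (Fin 3)

/-- Partial derivative in the i-th coordinate direction. -/
noncomputable def pdE (f : E3 → ℝ) (i : Fin 3) (x : E3) : ℝ :=
  fderiv ℝ f x (EuclideanSpace.single i 1)

/-- Gradient of a scalar function on ℝ³. -/
noncomputable def gradE (f : E3 → ℝ) (x : E3) : E3 :=
  (WithLp.equiv 2 (Fin 3 → ℝ)).symm (fun i => pdE f i x)

/-- Euclidean inner product on ℝ³. -/
def dotE (v w : E3) : ℝ := ∑ i, v i * w i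

/-- The rectangular box `[a₁,b₁] × [a₂,b₂] × [a₃,b₃]` in ℝ³. -/
def boxSet (a b : Fin 3 → ℝ) : Set E3 := {x | ∀ i, a i ≤ x i ∧ x i ≤ b i}

/-- The box-mollified function `s'_B(x) = ∫_B s'(x − y) dy`. -/
noncomputable def boxMollE (s' : E3 → ℝ) (a b : Fin 3 → ℝ) (x : E3) : ℝ :=
  ∫ y in boxSet a b, s' (x - y)

/-- The gauge-bridge pairing
`⟨b_ε, g⟩ = ∫_ε^{1−ε} ∫ s(y) g(γ_y(u)) · (γ₀'(u) + (1−2u)y) dy du`,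
where `γ_y(u) = γ₀(u) + u(1−u)y`. -/
noncomputable def bridgePairE (γ₀ : ℝ → E3) (s : E3 → ℝ) (ε : ℝ) (g : E3 → E3) : ℝ :=
  ∫ u in ε..(1 - ε),
    ∫ y, s y * dotE (g (γ₀ u + (u * (1 - u)) • y)) (deriv γ₀ u + (1 - 2 * u) • y)

open scoped Topology

theorem apply_sub_eq_zero_of_notMem_closedBall {E V : Type*} [SeminormedAddCommGroup E] [Zero V]
    {ρ : E → V} {r : ℝ} (hρ : Function.support ρ ⊆ Metric.closedBall 0 r) {x y : E}
    (hy : y ∉ Metric.closedBall x r) : ρ (x - y) = 0 := by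
  contrapose! hy
  simpa [dist_eq_norm, norm_sub_rev] using hρ hy

section Mollification

variable {E V : Type*} [NormedAddCommGroup E] [MeasurableSpace E]
  [NormedAddCommGroup V] [NormedSpace ℝ V]

/-- The mollified indicator function `1_B ⋆ ρ` of a set `B`, written as an integral over `B`. The
values of `ρ` are vectors so that the derivative of a mollified indicator is again one. -/
noncomputable def mollifiedIndicator (μ : Measure E) (ρ : E → V) (B : Set E) (x : E) : V :=
  ∫ y in B, ρ (x - y) ∂μ

variable {μ : Measure E} {B : Set E} {x : E} {r : ℝ}

theorem mollifiedIndicator_eq_convolution (ρ : E → V) (hB : MeasurableSet B) :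
    mollifiedIndicator μ ρ B =
      convolution (B.indicator fun _ ↦ (1 : ℝ)) ρ (ContinuousLinearMap.lsmul ℝ ℝ) μ := by
  ext x
  rw [convolution_lsmul, mollifiedIndicator, ← integral_indicator hB]
  congr with y
  by_cases hy : y ∈ B <;> simp [hy]

theorem mollifiedIndicator_of_disjoint_closedBall {ρ : E → V}
    (hρ : Function.support ρ ⊆ Metric.closedBall 0 r) (hx : Disjoint (Metric.closedBall x r) B) :
    mollifiedIndicator μ ρ B x = 0 :=
  setIntegral_eq_zero_of_forall_eq_zero fun _ hy ↦
    apply_sub_eq_zero_of_notMem_closedBall hρ (hx.notMem_of_mem_right hy)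

section Invariant

variable [BorelSpace E] [μ.IsAddLeftInvariant] [μ.IsNegInvariant]

theorem mollifiedIndicator_of_closedBall_subset {ρ : E → V}
    (hρ : Function.support ρ ⊆ Metric.closedBall 0 r) (hx : Metric.closedBall x r ⊆ B) :
    mollifiedIndicator μ ρ B x = ∫ y, ρ y ∂μ := by
  rw [mollifiedIndicator, setIntegral_eq_integral_of_forall_compl_eq_zero fun y hy ↦
    apply_sub_eq_zero_of_notMem_closedBall hρ (fun h ↦ hy (hx h)), integral_sub_left_eq_self ρ μ x]

theorem mollifiedIndicator_eq_ite {ρ : E → V} (hρ : Function.support ρ ⊆ Metric.closedBall 0 r)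
    (hx : Metric.closedBall x r ⊆ B ∨ Disjoint (Metric.closedBall x r) B) :
    mollifiedIndicator μ ρ B x = if Metric.closedBall x r ⊆ B then ∫ y, ρ y ∂μ else 0 := by
  split_ifs with h
  · exact mollifiedIndicator_of_closedBall_subset hρ h
  · exact mollifiedIndicator_of_disjoint_closedBall hρ (hx.resolve_left h)

theorem norm_mollifiedIndicator_le {ρ : E → V} (hρ : Integrable ρ μ) :
    ‖mollifiedIndicator μ ρ B x‖ ≤ ∫ y, ‖ρ y‖ ∂μ :=
  calc ‖mollifiedIndicator μ ρ B x‖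
      ≤ ∫ y in B, ‖ρ (x - y)‖ ∂μ := norm_integral_le_integral_norm _
    _ ≤ ∫ y, ‖ρ (x - y)‖ ∂μ :=
        setIntegral_le_integral (hρ.comp_sub_left x).norm (ae_of_all _ fun _ ↦ norm_nonneg _)
    _ = ∫ y, ‖ρ y‖ ∂μ := integral_sub_left_eq_self (‖ρ ·‖) μ x

end Invariant

section Smooth

variable [NormedSpace ℝ E] [BorelSpace E] [IsLocallyFiniteMeasure μ]

theorem contDiff_mollifiedIndicator {n : ℕ∞} {ρ : E → V} (hρ : ContDiff ℝ n ρ)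
    (hρc : HasCompactSupport ρ) (hB : MeasurableSet B) :
    ContDiff ℝ n (mollifiedIndicator μ ρ B) := by
  rw [mollifiedIndicator_eq_convolution ρ hB]
  exact hρc.contDiff_convolution_right _ ((locallyIntegrable_const 1).indicator hB) hρ

theorem fderiv_mollifiedIndicator [SFinite μ] [μ.IsAddLeftInvariant] {ρ : E → V}
    (hρ : ContDiff ℝ 1 ρ) (hρc : HasCompactSupport ρ) (hB : MeasurableSet B) :
    fderiv ℝ (mollifiedIndicator μ ρ B) = mollifiedIndicator μ (fderiv ℝ ρ) B := by
  ext1 x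
  rw [mollifiedIndicator_eq_convolution ρ hB, mollifiedIndicator_eq_convolution (fderiv ℝ ρ) hB,
    (hρc.hasFDerivAt_convolution_right _ ((locallyIntegrable_const 1).indicator hB) hρ x).fderiv]
  rfl

end Smooth

end Mollification

theorem integrable_clm_apply_of_norm_le {α V W : Type*} [MeasurableSpace α] {ν : Measure α}
    [NormedAddCommGroup V] [NormedSpace ℝ V] [NormedAddCommGroup W] [NormedSpace ℝ W]
    {A : α → V →L[ℝ] W} {v : α → V} {C : ℝ} (hA : AEStronglyMeasurable A ν)
    (hAC : ∀ x, ‖A x‖ ≤ C) (hv : Integrable v ν) : Integrable (fun x ↦ A x (v x)) ν :=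
  (hv.norm.const_mul C).mono'
    (isBoundedBilinearMap_apply.continuous.comp_aestronglyMeasurable
      (hA.prodMk hv.aestronglyMeasurable))
    (ae_of_all _ fun x ↦ (A x).le_of_opNorm_le (hAC x) (v x))

section Bridge

variable {E : Type*} [NormedAddCommGroup E] [NormedSpace ℝ E]

/-- The path `γ_y(u) = γ(u) + u(1 - u)y`, which has the endpoints of `γ : [0, 1] → E`. -/
def bridgePath (γ : ℝ → E) (y : E) (u : ℝ) : E := γ u + (u * (1 - u)) • y

/-- The velocity `γ'(u) + (1 - 2u)y` of the path `γ_y`. -/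
noncomputable def bridgeVelocity (γ : ℝ → E) (y : E) (u : ℝ) : E := deriv γ u + (1 - 2 * u) • y

/-- The pairing of the gauge bridge `b_ε` with the 1-form `ω`, where `s` is a density with respect
to `μ`. A vector field `g` on a Euclidean space corresponds to the 1-form `v ↦ g · v`, its gradient
to `fderiv`. -/
noncomputable def bridgePairing [MeasurableSpace E] (μ : Measure E) (γ : ℝ → E) (s : E → ℝ)
    (ε : ℝ) (ω : E → E →L[ℝ] ℝ) : ℝ :=
  ∫ u in ε..(1 - ε), ∫ y, s y * ω (bridgePath γ y u) (bridgeVelocity γ y u) ∂μ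

variable {γ : ℝ → E} {a b u : ℝ} {y : E} {F : E → ℝ} {C : ℝ}

@[simp] theorem bridgePath_zero : bridgePath γ y 0 = γ 0 := by simp [bridgePath]

@[simp] theorem bridgePath_one : bridgePath γ y 1 = γ 1 := by simp [bridgePath]

theorem continuous_bridgePath_left (γ : ℝ → E) (u : ℝ) : Continuous fun y ↦ bridgePath γ y u := by
  unfold bridgePath
  fun_prop

theorem continuousOn_bridgePath {S : Set ℝ} (hγ : ContinuousOn γ S) (y : E) :
    ContinuousOn (bridgePath γ y) S := by
  unfold bridgePath
  fun_prop

theorem hasDerivAt_bridgePath (hγ : DifferentiableAt ℝ γ u) (y : E) :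
    HasDerivAt (bridgePath γ y) (bridgeVelocity γ y u) u := by
  have hweight : HasDerivAt (fun u : ℝ ↦ u * (1 - u)) (1 - 2 * u) u :=
    ((hasDerivAt_id' u).mul ((hasDerivAt_id' u).const_sub 1)).congr_deriv (by ring)
  exact hγ.hasDerivAt.add (hweight.smul_const y)

theorem intervalIntegrable_bridgeVelocity (hγ' : IntervalIntegrable (deriv γ) volume a b) (y : E) :
    IntervalIntegrable (bridgeVelocity γ y) volume a b :=
  hγ'.add (Continuous.intervalIntegrable (by fun_prop) a b)

theorem intervalIntegral_fderiv_bridgePath (hγ : ∀ u ∈ Set.uIcc a b, DifferentiableAt ℝ γ u)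
    (hγ' : IntervalIntegrable (deriv γ) volume a b) (hF : ContDiff ℝ 1 F)
    (hFC : ∀ x, ‖fderiv ℝ F x‖ ≤ C) (y : E) :
    ∫ u in a..b, fderiv ℝ F (bridgePath γ y u) (bridgeVelocity γ y u) =
      F (bridgePath γ y b) - F (bridgePath γ y a) := by
  have hγc : ContinuousOn γ (Set.uIcc a b) := fun u hu ↦ (hγ u hu).continuousAt.continuousWithinAt
  have hcont : ContinuousOn (fun u ↦ fderiv ℝ F (bridgePath γ y u)) (Set.uIcc a b) :=
    (hF.continuous_fderiv one_ne_zero).comp_continuousOn (continuousOn_bridgePath hγc y)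
  refine intervalIntegral.integral_eq_sub_of_hasDerivAt (f := F ∘ bridgePath γ y) (fun u hu ↦
    (hF.differentiable one_ne_zero _).hasFDerivAt.comp_hasDerivAt u
      (hasDerivAt_bridgePath (hγ u hu) y)) ?_
  rw [intervalIntegrable_iff]
  exact integrable_clm_apply_of_norm_le
    ((hcont.mono Set.uIoc_subset_uIcc).aestronglyMeasurable measurableSet_uIoc)
    (fun u ↦ hFC _) (intervalIntegrable_bridgeVelocity hγ' y).def'

variable [MeasurableSpace E] {μ : Measure E} {s : E → ℝ}

theorem integrable_smul_bridgeVelocity [SFinite μ]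
    (hγ' : IntervalIntegrable (deriv γ) volume a b) (hs : Integrable s μ)
    (hs₁ : Integrable (fun y ↦ s y • y) μ) :
    Integrable (fun z : ℝ × E ↦ s z.2 • bridgeVelocity γ z.2 z.1)
      ((volume.restrict (Set.uIoc a b)).prod μ) := by
  have hweight : Integrable (fun u : ℝ ↦ 1 - 2 * u) (volume.restrict (Set.uIoc a b)) :=
    (Continuous.intervalIntegrable (by fun_prop) a b).def'
  refine ((hs.smul_prod hγ'.def').swap.add (hweight.smul_prod hs₁)).congr (ae_of_all _ fun z ↦ ?_)
  simp [bridgeVelocity, smul_comm (s z.2)]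

variable [OpensMeasurableSpace E]

theorem tendsto_integral_apply_bridgePath_sub (hγ : ContinuousOn γ (Set.Icc 0 1))
    (hs : Integrable s μ) (hF : Continuous F) (hFC : ∀ x, ‖F x‖ ≤ C) :
    Tendsto (fun ε ↦ ∫ y, s y * (F (bridgePath γ y (1 - ε)) - F (bridgePath γ y ε)) ∂μ) (𝓝[>] 0)
      (𝓝 ((∫ y, s y ∂μ) * (F (γ 1) - F (γ 0)))) := by
  have hε : ∀ᶠ ε : ℝ in 𝓝[>] 0, ε ∈ Set.Ioo 0 1 := Ioo_mem_nhdsGT one_pos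
  have hleft : Tendsto (fun ε : ℝ ↦ ε) (𝓝[>] 0) (𝓝[Set.Icc 0 1] 0) :=
    tendsto_nhdsWithin_iff.2 ⟨tendsto_id.mono_left nhdsWithin_le_nhds,
      hε.mono fun _ h ↦ Set.Ioo_subset_Icc_self h⟩
  have hright : Tendsto (fun ε : ℝ ↦ 1 - ε) (𝓝[>] 0) (𝓝[Set.Icc 0 1] 1) := by
    refine tendsto_nhdsWithin_iff.2 ⟨?_, hε.mono fun ε h ↦ ⟨by linarith [h.2], by linarith [h.1]⟩⟩
    exact (Continuous.tendsto' (by fun_prop) 0 1 (by simp)).mono_left nhdsWithin_le_nhds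
  have hlim (y : E) : Tendsto (fun ε ↦ F (bridgePath γ y (1 - ε)) - F (bridgePath γ y ε)) (𝓝[>] 0)
      (𝓝 (F (γ 1) - F (γ 0))) := by
    have hpath := hF.comp_continuousOn (continuousOn_bridgePath hγ y)
    simpa using ((hpath 1 (by simp)).tendsto.comp hright).sub
      ((hpath 0 (by simp)).tendsto.comp hleft)
  rw [← integral_mul_const]
  refine tendsto_integral_filter_of_dominated_convergence (fun y ↦ ‖s y‖ * (C + C))
    (Eventually.of_forall fun ε ↦ hs.aestronglyMeasurable.mul ?_)
    (Eventually.of_forall fun ε ↦ ae_of_all _ fun y ↦ ?_) (hs.norm.mul_const _)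
    (ae_of_all _ fun y ↦ (hlim y).const_mul (s y))
  · exact ((hF.comp (continuous_bridgePath_left γ _)).sub
      (hF.comp (continuous_bridgePath_left γ _))).aestronglyMeasurable
  · rw [norm_mul]
    gcongr
    exact norm_sub_le_of_le (hFC _) (hFC _)

variable [SecondCountableTopology E]

theorem aestronglyMeasurable_bridgePath_uncurry {ν : Measure ℝ} (hγ : AEStronglyMeasurable γ ν) :
    AEStronglyMeasurable (fun z : ℝ × E ↦ bridgePath γ z.2 z.1) (ν.prod μ) :=
  hγ.comp_fst.add (Continuous.aestronglyMeasurable (by fun_prop))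

theorem intervalIntegral_integral_fderiv_bridgePath [SFinite μ]
    (hγ : ∀ u ∈ Set.uIcc a b, DifferentiableAt ℝ γ u)
    (hγ' : IntervalIntegrable (deriv γ) volume a b) (hs : Integrable s μ)
    (hs₁ : Integrable (fun y ↦ s y • y) μ) (hF : ContDiff ℝ 1 F)
    (hFC : ∀ x, ‖fderiv ℝ F x‖ ≤ C) :
    ∫ u in a..b, ∫ y, s y * fderiv ℝ F (bridgePath γ y u) (bridgeVelocity γ y u) ∂μ =
      ∫ y, s y * (F (bridgePath γ y b) - F (bridgePath γ y a)) ∂μ := by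
  have hγm : AEStronglyMeasurable γ (volume.restrict (Set.uIoc a b)) :=
    ContinuousOn.aestronglyMeasurable
      (fun u hu ↦ (hγ u (Set.uIoc_subset_uIcc hu)).continuousAt.continuousWithinAt)
      measurableSet_uIoc
  have hint : Integrable
      (fun z : ℝ × E ↦ s z.2 * fderiv ℝ F (bridgePath γ z.2 z.1) (bridgeVelocity γ z.2 z.1))
      ((volume.restrict (Set.uIoc a b)).prod μ) := by
    simpa only [map_smul, smul_eq_mul] using integrable_clm_apply_of_norm_le
      ((hF.continuous_fderiv one_ne_zero).comp_aestronglyMeasurable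
        (aestronglyMeasurable_bridgePath_uncurry hγm))
      (fun z ↦ hFC _) (integrable_smul_bridgeVelocity hγ' hs hs₁)
  rw [intervalIntegral_integral_swap hint]
  congr with y
  rw [intervalIntegral.integral_const_mul, intervalIntegral_fderiv_bridgePath hγ hγ' hF hFC]

theorem bridgePairing_fderiv [SFinite μ] (hγ : ContDiffOn ℝ 1 γ (Set.Ioo 0 1)) (hs : Integrable s μ)
    (hs₁ : Integrable (fun y ↦ s y • y) μ) (hF : ContDiff ℝ 1 F)
    (hFC : ∀ x, ‖fderiv ℝ F x‖ ≤ C) {ε : ℝ} (hε : ε ∈ Set.Ioo (0 : ℝ) 1) :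
    bridgePairing μ γ s ε (fderiv ℝ F) =
      ∫ y, s y * (F (bridgePath γ y (1 - ε)) - F (bridgePath γ y ε)) ∂μ := by
  have hsub : Set.uIcc ε (1 - ε) ⊆ Set.Ioo 0 1 :=
    Set.ordConnected_Ioo.uIcc_subset hε ⟨by linarith [hε.2], by linarith [hε.1]⟩
  exact intervalIntegral_integral_fderiv_bridgePath
    (fun u hu ↦ (hγ.differentiableOn one_ne_zero).differentiableAt (isOpen_Ioo.mem_nhds (hsub hu)))
    ((hγ.continuousOn_deriv_of_isOpen isOpen_Ioo le_rfl).mono hsub).intervalIntegrable hs hs₁ hF hFC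

theorem tendsto_bridgePairing_fderiv [SFinite μ] {C' : ℝ} (hγ : ContinuousOn γ (Set.Icc 0 1))
    (hγ' : ContDiffOn ℝ 1 γ (Set.Ioo 0 1)) (hs : Integrable s μ)
    (hs₁ : Integrable (fun y ↦ s y • y) μ) (hF : ContDiff ℝ 1 F) (hFC : ∀ x, ‖F x‖ ≤ C)
    (hFC' : ∀ x, ‖fderiv ℝ F x‖ ≤ C') :
    Tendsto (fun ε ↦ bridgePairing μ γ s ε (fderiv ℝ F)) (𝓝[>] 0)
      (𝓝 ((∫ y, s y ∂μ) * (F (γ 1) - F (γ 0)))) := by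
  refine (tendsto_integral_apply_bridgePath_sub hγ hs hF.continuous hFC).congr' ?_
  filter_upwards [Ioo_mem_nhdsGT one_pos] with ε hε
  exact (bridgePairing_fderiv hγ' hs hs₁ hF hFC' hε).symm

end Bridge

theorem gauss_law_gauge_bridge_general {E : Type*} [NormedAddCommGroup E] [NormedSpace ℝ E]
    [FiniteDimensional ℝ E] [MeasurableSpace E] [BorelSpace E] {μ : Measure E}
    [μ.IsAddHaarMeasure] {γ : ℝ → E} (hγ : ContinuousOn γ (Set.Icc 0 1))
    (hγ' : ContDiffOn ℝ 1 γ (Set.Ioo 0 1)) {s : E → ℝ} (hs : Integrable s μ)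
    (hs₁ : Integrable (fun y ↦ s y • y) μ) {ρ : E → ℝ} (hρ : ContDiff ℝ 1 ρ) {r : ℝ}
    (hρr : Function.support ρ ⊆ Metric.closedBall 0 r) {B : Set E} (hB : MeasurableSet B)
    (h₀ : Metric.closedBall (γ 0) r ⊆ B ∨ Disjoint (Metric.closedBall (γ 0) r) B)
    (h₁ : Metric.closedBall (γ 1) r ⊆ B ∨ Disjoint (Metric.closedBall (γ 1) r) B) :
    Tendsto (fun ε ↦ -bridgePairing μ γ s ε (fderiv ℝ (mollifiedIndicator μ ρ B))) (𝓝[>] 0)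
      (𝓝 ((∫ y, s y ∂μ) * ((if Metric.closedBall (γ 0) r ⊆ B then ∫ x, ρ x ∂μ else 0) -
        if Metric.closedBall (γ 1) r ⊆ B then ∫ x, ρ x ∂μ else 0))) := by
  have hρc : HasCompactSupport ρ :=
    .of_support_subset_isCompact (isCompact_closedBall 0 r) hρr
  have hρ_int : Integrable ρ μ := hρ.continuous.integrable_of_hasCompactSupport hρc
  have hfderiv_int : Integrable (fderiv ℝ ρ) μ :=
    (hρ.continuous_fderiv one_ne_zero).integrable_of_hasCompactSupport (hρc.fderiv ℝ)
  have hlim := tendsto_bridgePairing_fderiv hγ hγ' hs hs₁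
    (contDiff_mollifiedIndicator hρ hρc hB) (fun _ ↦ norm_mollifiedIndicator_le hρ_int)
    (fun x ↦ by
      rw [fderiv_mollifiedIndicator hρ hρc hB]
      exact norm_mollifiedIndicator_le hfderiv_int)
  rw [← mollifiedIndicator_eq_ite hρr h₀, ← mollifiedIndicator_eq_ite hρr h₁, ← neg_sub, mul_neg]
  exact hlim.neg

theorem measurableSet_boxSet (a b : Fin 3 → ℝ) : MeasurableSet (boxSet a b) := by
  unfold boxSet
  measurability

theorem boxMollE_eq_mollifiedIndicator (s' : E3 → ℝ) (a b : Fin 3 → ℝ) :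
    boxMollE s' a b = mollifiedIndicator volume s' (boxSet a b) := rfl

theorem dotE_gradE (F : E3 → ℝ) (x v : E3) : dotE (gradE F x) v = fderiv ℝ F x v := by
  have hv : v = ∑ i, v i • EuclideanSpace.single i (1 : ℝ) := by
    ext j
    simp [Finset.sum_apply, Pi.single_apply]
  conv_rhs => rw [hv, map_sum]
  simp [dotE, gradE, pdE, mul_comm]

theorem bridgePairE_gradE (γ₀ : ℝ → E3) (s F : E3 → ℝ) (ε : ℝ) :
    bridgePairE γ₀ s ε (gradE F) = bridgePairing volume γ₀ s ε (fderiv ℝ F) := by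
  simp only [bridgePairE, dotE_gradE, bridgePairing, bridgePath, bridgeVelocity]

/-- Gauss' law for the gauge bridge: the smeared flux of the gauge bridge through the
boundary of a box `B` converges, as `ε → 0`, to `q` if `B` encloses only `x₁`, to `−q`
if `B` encloses only `x₂`, and to `0` if `B` encloses both or neither charge location. -/
theorem gauss_law_gauge_bridge (x₁ x₂ : E3) (γ₀ : ℝ → E3) (hγ : ContDiff ℝ 1 γ₀)
    (hγ0 : γ₀ 0 = x₁) (hγ1 : γ₀ 1 = x₂)
    (s : E3 → ℝ) (hs : Continuous s) (hsc : HasCompactSupport s)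
    (q : ℝ) (hq : ∫ y, s y = q)
    (s' : E3 → ℝ) (hs' : ContDiff ℝ (⊤ : ℕ∞) s') (hs'c : HasCompactSupport s')
    (h1 : ∫ x, s' x = 1) (r : ℝ) (hss' : tsupport s' ⊆ Metric.closedBall 0 r)
    (a b : Fin 3 → ℝ) (hab : ∀ i, a i ≤ b i)
    (hx1 : Metric.closedBall x₁ r ⊆ boxSet a b ∨
           Metric.closedBall x₁ r ∩ boxSet a b = ∅)
    (hx2 : Metric.closedBall x₂ r ⊆ boxSet a b ∨
           Metric.closedBall x₂ r ∩ boxSet a b = ∅) :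
    Tendsto (fun ε => -(bridgePairE γ₀ s ε (gradE (boxMollE s' a b))))
      (nhdsWithin 0 (Set.Ioi 0))
      (nhds (q * ((if Metric.closedBall x₁ r ⊆ boxSet a b then (1:ℝ) else 0) -
                  (if Metric.closedBall x₂ r ⊆ boxSet a b then (1:ℝ) else 0)))) := by
  subst hγ0 hγ1 hq
  have hs_int : Integrable s := hs.integrable_of_hasCompactSupport hsc
  have hs_moment : Integrable fun y ↦ s y • y :=
    (hs.smul continuous_id).integrable_of_hasCompactSupport hsc.smul_right
  have hB := measurableSet_boxSet a b
  simpa only [bridgePairE_gradE, boxMollE_eq_mollifiedIndicator, h1] using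
    gauss_law_gauge_bridge_general hγ.continuous.continuousOn hγ.contDiffOn hs_int hs_moment
      (hs'.of_le (by simp)) ((subset_tsupport s').trans hss') hB
      (hx1.imp_right Set.disjoint_iff_inter_eq_empty.2)
      (hx2.imp_right Set.disjoint_iff_inter_eq_empty.2)
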